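/- arXiv:0909.3388 — 2 statements merged into one kernel-verified Lean document; each statement's English description precedes it below -/
import Mathlib

section
/- If √2 is simply normal to base 2, i.e. the asymptotic density of zeroes among the binary digits b_1, b_2, ..., b_n of the fractional part of √2 tends to 1/2 as n → ∞, then the numbers d_N of undesirable parameters n with 2 ≤ n ≤ N satisfy liminf_{N→∞} d_N/N ≥ 1/6. -/
/-!
Write `n = k + 2` and let `y = ⌊2 ^ k * √2⌋`. Taking `x = 2 ^ (k + 1) - y` gives
`x * (2 ^ n - x) = 4 ^ (k + 1) - y ^ 2`, so `n` is undesirable as soon as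
`2 * 4 ^ k - 2 ^ k < y ^ 2 ≤ 2 * 4 ^ k`. This holds when the fractional part of `2 ^ k * √2` is
slightly less than `√2 / 4 = (0.0101101…)₂`, in particular (for `k ≥ 3`) when its first five binary
digits form a number at most `10 = (01010)₂`, that is, when one of the patterns `00`, `0100`,
`01010` begins at the digit `b_{k+1}` (`undesirable_of_good`).

It remains to bound from below the number `G` of zeroes that begin such a pattern. A zero that
begins none of them begins `011` or `01011`; let `A` and `B` be the numbers of zeroes of these two
kinds. The zero in the middle of `01011` begins `011`, so `B ≤ A` up to a bounded error.
Cutting the word before each zero and comparing the numbers of ones and zeroes in the pieces,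
`A - #00 ≤ #ones - #zeroes`. Hence `#zeroes = A + B + G ≤ 2 * A + G ≤
3 * G + 2 * (#ones - #zeroes)`, again up to a bounded error. With `#ones = N - #zeroes` this reads
`5 * #zeroes - 2 * N ≤ 3 * G + O(1)`, and zeroes of density `1 / 2` give `G ≥ N / 6 - o(N)`.
The inequality is proved by induction on `N`: the bounded error is a potential depending on the next
four digits, and each step is a check over all words of length five (`potential_step`,
`five_mul_Zcount_le`).
-/

open Filter

/-- `patternAt w i` means the 1-based index `i ≥ 2` in the finite binary word `w`
(`false` = 0, `true` = 1) is a member of the set `P(w)`: one of the patterns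
`00`, `0100`, `01010` occurs starting at position `i-1` (1-based) and fits in `w`. -/
def patternAt (w : List Bool) (i : ℕ) : Prop :=
  2 ≤ i ∧
    ([false, false] <+: w.drop (i - 2) ∨
     [false, true, false, false] <+: w.drop (i - 2) ∨
     [false, true, false, true, false] <+: w.drop (i - 2))

instance (w : List Bool) : DecidablePred (patternAt w) := fun i => by
  unfold patternAt; infer_instance

/-- The set `P(w)` of indices, as a `Finset`. -/
def Pset (w : List Bool) : Finset ℕ :=
  (Finset.range (w.length + 1)).filter (patternAt w)

/-- `|P(w)|`. -/
def Pcount (w : List Bool) : ℕ := (Pset w).card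

/-- `|Z(w)|`: the number of zeroes in `w`. -/
def Zcount (w : List Bool) : ℕ := w.count false

/-- The initial subword `w^(n)` of an infinite binary word `w = w_1 w_2 w_3 ⋯`
(indexed so that `w k` is the letter `w_{k+1}`). -/
def prefixWord (w : ℕ → Bool) (n : ℕ) : List Bool := List.ofFn (fun k : Fin n => w k)

noncomputable def rinf (w : ℕ → Bool) : ℝ :=
  liminf (fun n : ℕ => (Zcount (prefixWord w n) : ℝ) / n) atTop

noncomputable def rsup (w : ℕ → Bool) : ℝ :=
  limsup (fun n : ℕ => (Zcount (prefixWord w n) : ℝ) / n) atTop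

noncomputable def Rinf (w : ℕ → Bool) : ℝ :=
  liminf (fun n : ℕ => (Pcount (prefixWord w n) : ℝ) / n) atTop

noncomputable def Rsup (w : ℕ → Bool) : ℝ :=
  limsup (fun n : ℕ => (Pcount (prefixWord w n) : ℝ) / n) atTop

/-- The integer-valued logistic map `L_n(x) = ⌊x(2^n − x)/2^{n−2}⌋` (for `x ≤ 2^n`,
natural-number division is exactly the floor of the real quotient). -/
def Ln (n x : ℕ) : ℕ := x * (2 ^ n - x) / 2 ^ (n - 2)

/-- A parameter `n ≥ 2` is *undesirable* if some `x ∈ X_n = {1, …, 2^n − 1}`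
satisfies `L_n(x) = 2^{n−1}`. -/
def Undesirable (n : ℕ) : Prop :=
  ∃ x ∈ Finset.Icc 1 (2 ^ n - 1), Ln n x = 2 ^ (n - 1)

instance : DecidablePred Undesirable := fun n => by
  unfold Undesirable; infer_instance

/-- The `i`-th binary digit `b_i = ⌊2^i √2⌋ mod 2` of the fractional part of `√2`. -/
noncomputable def sqrt2digit (i : ℕ) : ℤ := ⌊(2 : ℝ) ^ i * Real.sqrt 2⌋ % 2

/-- The infinite binary word `b = b_1 b_2 b_3 ⋯` of binary digits of the fractional
part of `√2`, indexed so that `bword k` is the digit `b_{k+1}`. -/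
noncomputable def bword : ℕ → Bool := fun k => decide (sqrt2digit (k + 1) = 1)

/-- `d_N`: the number of undesirable parameters `n` with `2 ≤ n ≤ N`. -/
def numUndesirable (N : ℕ) : ℕ :=
  ((Finset.Icc 2 N).filter (fun n => Undesirable n)).card

/-- One of the patterns `00`, `0100`, `01010` is a prefix of `abcde`
(`false` is the digit 0, `true` the digit 1). -/
def goodPattern (a b c d e : Bool) : Bool :=
  !a && (!b || (!c && !d) || (!c && d && !e))

/-- The bounded error term in the counting inequality, as a function of the next four letters.
It bounds the largest total of `5 * [zero] - 2 - 3 * [good zero]` over the letters of a word that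
is followed by `abcd`. -/
def potential (a b c d : Bool) : ℤ :=
  if a then (if b then 4 else if c && d then 3 else 2) else (if b && c then 1 else 0)

lemma potential_nonneg (a b c d : Bool) : 0 ≤ potential a b c d := by
  revert a b c d; decide

lemma potential_le (a b c d : Bool) : potential a b c d ≤ 4 := by
  revert a b c d; decide

lemma potential_step (a b c d e : Bool) :
    5 * (if a = false then 1 else 0) - 2 + potential a b c d ≤
      3 * (if goodPattern a b c d e = true then 1 else 0) + potential b c d e := by
  revert a b c d e; decide

lemma floor_two_pow_mul_sqrt_two (i : ℕ) :
    ⌊(2 : ℝ) ^ i * Real.sqrt 2⌋ = (Nat.sqrt (2 * 4 ^ i) : ℤ) := by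
  rw [← Real.floor_real_sqrt_eq_nat_sqrt]
  congr 1
  push_cast
  rw [mul_comm, Real.sqrt_mul (by norm_num)]
  congr 1
  rw [show (4 : ℝ) ^ i = (2 ^ i) ^ 2 by rw [← pow_mul, mul_comm, pow_mul]; norm_num]
  exact (Real.sqrt_sq (by positivity)).symm

/-- The recursion `⌊2 ^ (k + 1) * √2⌋ = 2 * ⌊2 ^ k * √2⌋ + b_{k+1}`. -/
lemma sqrt_succ (k : ℕ) :
    Nat.sqrt (2 * 4 ^ (k + 1)) =
      2 * Nat.sqrt (2 * 4 ^ k) + (if bword k = true then 1 else 0) := by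
  have h1 := Nat.sqrt_le' (2 * 4 ^ k)
  have h2 := Nat.lt_succ_sqrt' (2 * 4 ^ k)
  have h3 := Nat.sqrt_le' (2 * 4 ^ (k + 1))
  have h4 := Nat.lt_succ_sqrt' (2 * 4 ^ (k + 1))
  have hb : bword k = true ↔ Nat.sqrt (2 * 4 ^ (k + 1)) % 2 = 1 := by
    simp only [bword, sqrt2digit, floor_two_pow_mul_sqrt_two, decide_eq_true_eq]
    omega
  generalize Nat.sqrt (2 * 4 ^ (k + 1)) = t at *
  generalize Nat.sqrt (2 * 4 ^ k) = s at *
  rw [pow_succ 4 k] at h3 h4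
  simp only [Nat.succ_eq_add_one] at h2 h4
  have h5 : 2 * s < t + 1 := by
    refine lt_of_pow_lt_pow_left₀ 2 (by positivity) ?_
    linarith
  have h6 : t < 2 * (s + 1) := by
    refine lt_of_pow_lt_pow_left₀ 2 (by positivity) ?_
    linarith
  simp only [hb]
  split_ifs <;> omega

lemma undesirable_of_sq {k y : ℕ} (h1 : y ^ 2 ≤ 2 * 4 ^ k) (h2 : 2 * 4 ^ k < y ^ 2 + 2 ^ k) :
    Undesirable (k + 2) := by
  have h4 : (4 : ℕ) ^ k = 2 ^ k * 2 ^ k := by rw [← mul_pow]; norm_num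
  rw [h4] at h1 h2
  have hp : 0 < 2 ^ k := by positivity
  have hy : y < 2 * 2 ^ k := by
    refine lt_of_pow_lt_pow_left₀ 2 (by positivity) ?_
    nlinarith
  refine ⟨2 * 2 ^ k - y, ?_, ?_⟩
  · rw [Finset.mem_Icc, pow_add]
    omega
  · unfold Ln
    obtain ⟨x, hx⟩ : ∃ x, 2 * 2 ^ k = x + y := ⟨2 * 2 ^ k - y, by omega⟩
    have e1 : 2 * 2 ^ k - y = x := by omega
    have e2 : 2 ^ (k + 2) - x = x + 2 * y := by rw [pow_add]; omega
    have e3 : k + 2 - 1 = k + 1 := rfl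
    rw [e1, e2, e3, Nat.add_sub_cancel, pow_succ 2 k]
    generalize 2 ^ k = p at *
    -- `x * (x + 2 * y) = (x + y) ^ 2 - y ^ 2` with `x + y = 2 * p`.
    have e4 : x * (x + 2 * y) + y ^ 2 = 4 * (p * p) := by
      have : (x + y) * (x + y) = 4 * (p * p) := by rw [← hx]; ring
      linarith [this, (by ring : (x + y) * (x + y) = x * (x + 2 * y) + y ^ 2)]
    apply Nat.div_eq_of_lt_le <;> nlinarith

/-- If a pattern `00`, `0100`, `01010` begins at `b_{k+1}`, then the five digits from `b_{k+1}` on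
form a number at most 10, so `2 ^ k * √2 < y + 11 / 32` where `y = ⌊2 ^ k * √2⌋`. As
`11 / 32 < √2 / 4`, this forces `2 * 4 ^ k - y ^ 2 < 2 ^ k` once `k` is not too small. -/
lemma undesirable_of_good {k : ℕ} (hk : 3 ≤ k)
    (hg : goodPattern (bword k) (bword (k + 1)) (bword (k + 2)) (bword (k + 3))
      (bword (k + 4)) = true) :
    Undesirable (k + 2) := by
  have key : Nat.sqrt (2 * 4 ^ (k + 5)) ≤ 32 * Nat.sqrt (2 * 4 ^ k) + 10 := by
    rw [sqrt_succ (k + 4), sqrt_succ (k + 3), sqrt_succ (k + 2), sqrt_succ (k + 1), sqrt_succ k]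
    revert hg
    generalize bword k = a
    generalize bword (k + 1) = b
    generalize bword (k + 2) = c
    generalize bword (k + 3) = d
    generalize bword (k + 4) = e
    cases a <;> cases b <;> cases c <;> cases d <;> cases e <;> simp [goodPattern] <;> omega
  have h1 := Nat.sqrt_le' (2 * 4 ^ k)
  have h2 := Nat.lt_succ_sqrt' (2 * 4 ^ (k + 5))
  refine undesirable_of_sq h1 ?_
  have h3 : 2 * 4 ^ (k + 5) < (32 * Nat.sqrt (2 * 4 ^ k) + 11) ^ 2 :=
    h2.trans_le (Nat.pow_le_pow_left (by omega) 2)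
  have h8 : 2 ^ 3 ≤ 2 ^ k := Nat.pow_le_pow_right (by norm_num) hk
  have h4 : (4 : ℕ) ^ k = 2 ^ k * 2 ^ k := by rw [← mul_pow]; norm_num
  rw [pow_add 4 k] at h3
  generalize Nat.sqrt (2 * 4 ^ k) = y at *
  rw [h4] at *
  generalize 2 ^ k = p at *
  -- `y ≤ √2 * p < (17 / 12) * p`
  have h5 : 12 * y ≤ 17 * p := by
    refine (Nat.pow_le_pow_iff_left two_ne_zero).1 ?_
    nlinarith
  nlinarith

lemma Zcount_prefixWord_succ (w : ℕ → Bool) (n : ℕ) :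
    Zcount (prefixWord w (n + 1)) = Zcount (prefixWord w n) + (if w n = false then 1 else 0) := by
  simp only [Zcount, prefixWord, List.ofFn_succ_last, List.count_append, Fin.val_castSucc,
    Fin.val_last, List.count_singleton, beq_iff_eq]

lemma numUndesirable_succ (n : ℕ) (hn : 1 ≤ n) :
    numUndesirable (n + 1) =
      numUndesirable n + (if Undesirable (n + 1) then 1 else 0) := by
  unfold numUndesirable
  rw [← Finset.insert_Icc_right_eq_Icc_add_one (by omega), Finset.filter_insert]
  split_ifs with h
  · rw [Finset.card_insert_of_notMem (by simp)]
  · rfl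

lemma numUndesirable_le (n : ℕ) : numUndesirable n ≤ n := by
  unfold numUndesirable
  refine (Finset.card_filter_le _ _).trans ?_
  rw [Nat.card_Icc]
  omega

lemma Zcount_prefixWord_le (w : ℕ → Bool) (n : ℕ) : Zcount (prefixWord w n) ≤ n := by
  unfold Zcount
  refine List.count_le_length.trans ?_
  simp [prefixWord]

lemma five_mul_Zcount_le (N : ℕ) :
    5 * (Zcount (prefixWord bword (N + 3)) : ℤ) - 2 * (N + 3 : ℕ) ≤
      3 * numUndesirable (N + 4) +
        potential (bword (N + 3)) (bword (N + 4)) (bword (N + 5)) (bword (N + 6)) + 9 := by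
  induction N with
  | zero =>
    have h1 := Zcount_prefixWord_le bword 3
    have h2 := potential_nonneg (bword 3) (bword 4) (bword 5) (bword 6)
    simp only [zero_add]
    omega
  | succ N ih =>
    have hs := potential_step (bword (N + 3)) (bword (N + 4)) (bword (N + 5)) (bword (N + 6))
      (bword (N + 7))
    have hz := Zcount_prefixWord_succ bword (N + 3)
    have hu := numUndesirable_succ (N + 4) (by omega)
    have hg := undesirable_of_good (k := N + 3) (by omega)
    rw [show N + 1 + 3 = N + 3 + 1 by ring, show N + 1 + 4 = N + 4 + 1 by ring,
      show N + 1 + 5 = N + 6 by ring, show N + 1 + 6 = N + 7 by ring, hz, hu]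
    simp only [add_assoc, Nat.reduceAdd] at *
    by_cases hgood : goodPattern (bword (N + 3)) (bword (N + 4)) (bword (N + 5)) (bword (N + 6))
      (bword (N + 7)) = true
    · simp only [hgood, hg hgood, if_true] at *
      split_ifs at * <;> push_cast at * <;> linarith
    · simp only [hgood] at *
      split_ifs at * <;> push_cast at * <;> linarith

lemma five_mul_Zcount_le' {N : ℕ} (hN : 3 ≤ N) :
    5 * (Zcount (prefixWord bword N) : ℝ) - 2 * N ≤ 3 * numUndesirable N + 16 := by
  obtain ⟨M, rfl⟩ := Nat.exists_eq_add_of_le' hN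
  have h1 := five_mul_Zcount_le M
  have h2 := potential_le (bword (M + 3)) (bword (M + 4)) (bword (M + 5)) (bword (M + 6))
  have h3 := numUndesirable_succ (M + 3) (by omega)
  have h4 : numUndesirable (M + 4) ≤ numUndesirable (M + 3) + 1 := by
    rw [h3]; split_ifs <;> omega
  have h5 : 5 * (Zcount (prefixWord bword (M + 3)) : ℤ) - 2 * (M + 3 : ℕ) ≤
      3 * numUndesirable (M + 3) + 16 := by omega
  exact_mod_cast h5

theorem stmt_12
    (h : Filter.Tendsto (fun n : ℕ => (Zcount (prefixWord bword n) : ℝ) / n) atTop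
      (nhds (1 / 2))) :
    (1 : ℝ) / 6 ≤ liminf (fun N : ℕ => (numUndesirable N : ℝ) / N) atTop := by
  have hlim : Tendsto (fun N : ℕ => (5 / 3 : ℝ) * ((Zcount (prefixWord bword N) : ℝ) / N) - 2 / 3
      - 16 / 3 / (N : ℝ)) atTop (nhds (1 / 6)) := by
    have := ((h.const_mul (5 / 3)).sub_const (2 / 3)).sub
      (tendsto_const_div_atTop_nhds_zero_nat (16 / 3 : ℝ))
    convert this using 2
    norm_num
  rw [← hlim.liminf_eq]
  refine liminf_le_liminf ?_ hlim.isBoundedUnder_ge ?_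
  · filter_upwards [eventually_ge_atTop 3] with N hN
    have hpos : (0 : ℝ) < N := by exact_mod_cast (by omega : 0 < N)
    have := five_mul_Zcount_le' hN
    rw [le_div_iff₀ hpos]
    have e : ((5 / 3 : ℝ) * ((Zcount (prefixWord bword N) : ℝ) / N) - 2 / 3
      - 16 / 3 / (N : ℝ)) * N = 5 / 3 * Zcount (prefixWord bword N) - 2 / 3 * N - 16 / 3 := by
      field_simp
    rw [e]
    linarith
  · refine (isBoundedUnder_of ⟨1, fun N => ?_⟩ : IsBoundedUnder (· ≤ ·) atTop _).isCoboundedUnder_ge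
    exact div_le_one_of_le₀ (by exact_mod_cast numUndesirable_le N) (by positivity)
end

section
/- Let v and v' be finite binary words such that 01010 is not a contiguous subword of the word v · 010. Then |P(v · 01100 · v')| ≤ |P(v · 01010 · v')|, where · denotes concatenation. -/
/-!
Prepending a letter to a word raises `|P|` by one exactly when one of the three patterns occurs at
the very start of the new word (`Pcount_cons`).  Within the block `01100` only `00` at its fourth
letter contributes, apart from the occurrences starting at the fifth letter, which see the same
suffix `0v'` in both words.  This single occurrence is matched by `01010` at the start of the other
block (`Pcount_block_le`).

No pattern contains `11`, so an occurrence that starts inside `v` and meets the block `01100` ends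
at the first or second letter of the block, where the two blocks agree; it therefore survives
the replacement of `01100` by `01010` (`startPat_block`).  Induction on `v` concludes.
-/

open Filter

/-- One of the patterns `00`, `0100`, `01010` is a prefix of `w`. -/
def StartPat (w : List Bool) : Prop :=
  [false, false] <+: w ∨ [false, true, false, false] <+: w ∨
    [false, true, false, true, false] <+: w

instance : DecidablePred StartPat := fun w => by
  unfold StartPat; infer_instance

lemma patternAt_add_two (w : List Bool) (j : ℕ) :
    patternAt w (j + 2) ↔ StartPat (w.drop j) := by
  simp [patternAt, StartPat]

lemma not_patternAt_zero (w : List Bool) : ¬ patternAt w 0 := by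
  simp [patternAt]

lemma not_patternAt_one (w : List Bool) : ¬ patternAt w 1 := by
  simp [patternAt]

lemma not_startPat_nil : ¬ StartPat [] := by decide

lemma Pcount_eq_sum (w : List Bool) :
    Pcount w = ∑ j ∈ Finset.range w.length, if StartPat (w.drop j) then 1 else 0 := by
  unfold Pcount Pset
  rw [Finset.card_filter]
  rcases w with _ | ⟨a, w⟩
  · simp [not_patternAt_zero]
  · -- The index `j` of the right-hand sum is `i - 2`; its last value only sees a single letter.
    have hlast : ¬ StartPat ((a :: w).drop w.length) := by
      intro hs
      have hl : ((a :: w).drop w.length).length = 1 := by simp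
      rcases hs with hs | hs | hs <;> · have := hs.length_le; rw [hl] at this; simp at this
    rw [List.length_cons, Finset.sum_range_succ', Finset.sum_range_succ',
      Finset.sum_range_succ _ w.length]
    simp [not_patternAt_zero, not_patternAt_one, patternAt_add_two, hlast]

lemma Pcount_cons (a : Bool) (w : List Bool) :
    Pcount (a :: w) = Pcount w + if StartPat (a :: w) then 1 else 0 := by
  rw [Pcount_eq_sum, Pcount_eq_sum, List.length_cons, Finset.sum_range_succ']
  simp

lemma Pcount_block_le (v' : List Bool) :
    Pcount ([false, true, true, false, false] ++ v') ≤
      Pcount ([false, true, false, true, false] ++ v') := by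
  simp only [List.cons_append, List.nil_append, Pcount_cons]
  simp [StartPat]

/-- Replacing `01100` by `01010` destroys no pattern occurrence that starts before the block. -/
lemma startPat_block (a : Bool) (v v' : List Bool)
    (h : StartPat (a :: (v ++ ([false, true, true, false, false] ++ v')))) :
    StartPat (a :: (v ++ ([false, true, false, true, false] ++ v'))) := by
  -- Patterns have length at most five, so at most four letters of `v` matter.
  rcases v with _ | ⟨b, _ | ⟨c, _ | ⟨d, _ | ⟨e, v⟩⟩⟩⟩ <;>
    simp_all [StartPat]

/-- The inequality holds for every left context `v`. -/
lemma Pcount_context_le (v v' : List Bool) :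
    Pcount (v ++ ([false, true, true, false, false] ++ v')) ≤
      Pcount (v ++ ([false, true, false, true, false] ++ v')) := by
  induction v with
  | nil => exact Pcount_block_le v'
  | cons a v ih =>
    change Pcount (a :: (v ++ _)) ≤ Pcount (a :: (v ++ _))
    rw [Pcount_cons, Pcount_cons]
    refine Nat.add_le_add ih ?_
    split_ifs with h₁ h₂
    · exact le_rfl
    · exact absurd (startPat_block a v v' h₁) h₂
    · exact Nat.zero_le _
    · exact le_rfl

theorem stmt_16 (v v' : List Bool)
    (h : ¬ ([false, true, false, true, false] <:+: (v ++ [false, true, false]))) :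
    Pcount (v ++ [false, true, true, false, false] ++ v') ≤
      Pcount (v ++ [false, true, false, true, false] ++ v') := by
  rw [List.append_assoc, List.append_assoc]
  exact Pcount_context_le v v'
end
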